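/- Let l_c > 0 and let z : ℝ → ℝ be differentiable with z(0) = 1, z(x) → 0 as x → +∞ and as x → −∞, and such that z² and (z')² are integrable on ℝ. Then ∫_ℝ [ (1/(2 l_c)) z(x)² + (l_c/2) z'(x)² ] dx ≥ 1; that is, the exponential profile exp(−|x|/l_c) minimizes the regularized crack surface among all admissible one-dimensional crack profiles. -/

import Mathlib

open MeasureTheory Filter

/-- Among all differentiable one-dimensional crack profiles z with z(0) = 1, z → 0 at ±∞,
and z², (z')² integrable, the regularized crack surface is at least one:
∫ [(1/(2l_c)) z² + (l_c/2) (z')²] dx ≥ 1; hence exp(−|x|/l_c) is a minimizer. -/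
theorem crack_profile_minimizer (lc : ℝ) (hlc : 0 < lc)
    (z : ℝ → ℝ) (hdiff : Differentiable ℝ z) (h0 : z 0 = 1)
    (htop : Tendsto z atTop (nhds 0)) (hbot : Tendsto z atBot (nhds 0))
    (hint1 : Integrable (fun x : ℝ => (z x) ^ 2))
    (hint2 : Integrable (fun x : ℝ => (deriv z x) ^ 2)) :
    1 ≤ ∫ x : ℝ, (1 / (2 * lc) * (z x) ^ 2 + lc / 2 * (deriv z x) ^ 2) := by
  have hF : Integrable (fun x : ℝ => 1 / (2 * lc) * (z x) ^ 2 + lc / 2 * (deriv z x) ^ 2) :=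
    (hint1.const_mul _).add (hint2.const_mul _)
  have key : ∀ a b : ℝ, |a * b| ≤ 1 / (2 * lc) * a ^ 2 + lc / 2 * b ^ 2 := by
    intro a b
    have e1 : 1 / (2 * lc) * a ^ 2 + lc / 2 * b ^ 2 - a * b = (a - lc * b) ^ 2 / (2 * lc) := by
      field_simp
      ring
    have e2 : 1 / (2 * lc) * a ^ 2 + lc / 2 * b ^ 2 + a * b = (a + lc * b) ^ 2 / (2 * lc) := by
      field_simp
      ring
    have p1 : 0 ≤ (a - lc * b) ^ 2 / (2 * lc) := by positivity
    have p2 : 0 ≤ (a + lc * b) ^ 2 / (2 * lc) := by positivity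
    rw [abs_le]
    constructor <;> linarith
  have hG : Integrable (fun x : ℝ => z x * deriv z x) := by
    refine hF.mono' ?_ (Eventually.of_forall fun x => ?_)
    · exact (hdiff.continuous.measurable.mul (measurable_deriv z)).aestronglyMeasurable
    · rw [Real.norm_eq_abs]
      exact key _ _
  have hd : ∀ x : ℝ, HasDerivAt (fun x => z x ^ 2 / 2) (z x * deriv z x) x := by
    intro x
    have h := (((hdiff x).hasDerivAt).pow 2).div_const 2
    refine h.congr_deriv ?_
    simp only [Nat.cast_ofNat, Nat.add_one_sub_one, pow_one]
    ring
  have ht : Tendsto (fun x => z x ^ 2 / 2) atTop (nhds 0) := by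
    simpa using (htop.pow 2).div_const 2
  have hb : Tendsto (fun x => z x ^ 2 / 2) atBot (nhds 0) := by
    simpa using (hbot.pow 2).div_const 2
  have i1 := integral_Ioi_of_hasDerivAt_of_tendsto' (a := 0) (fun x _ => hd x) hG.integrableOn ht
  have i2 := integral_Iic_of_hasDerivAt_of_tendsto' (a := 0) (fun x _ => hd x) hG.integrableOn hb
  simp only [h0] at i1 i2
  have j1 := integral_mono (μ := volume.restrict (Set.Ioi (0:ℝ))) hG.integrableOn.neg
    hF.integrableOn (fun x => (neg_le_abs _).trans (key (z x) (deriv z x)))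
  have j2 := integral_mono (μ := volume.restrict (Set.Iic (0:ℝ))) hG.integrableOn
    hF.integrableOn (fun x => (le_abs_self _).trans (key (z x) (deriv z x)))
  simp only [Pi.neg_apply, integral_neg] at j1
  rw [← intervalIntegral.integral_Iic_add_Ioi (b := 0) hF.integrableOn hF.integrableOn]
  linarith
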